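/- Let V be a compact subset of ℝ with Lebesgue measure λ(V) > 0, let α, b ∈ C(V) with α(v) > 0 for all v ∈ V, let T : C(V) → C(V) be the map T(y)(v) = α(v)y(v) + b(v), and let J ≥ 2. Then for every Borel probability measure P on C(V) and every x ∈ C(V), D_MJ(T(x), T_*P) = D_MJ(x, P), where T_*P is the pushforward of P under T. -/

import Mathlib

/-!
The band condition `min_k y_k(v) ≤ x(v) ≤ max_k y_k(v)` only compares the values of the curves at
`v`, so it survives every map `T` of `C(V, ℝ)` that acts at each point by a strictly increasing
function of the value there. The `j`-fold product of `T_*P` is the pushforward of `P^{⊗j}` under the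
coordinatewise action of `T`, and the change of variables formula gives the invariance of each
summand. The integrand is measurable because the band condition is closed in `(y, v)` jointly.
-/

open MeasureTheory Filter Topology

/-- Lebesgue measure on the subtype `V ⊆ ℝ`. -/
noncomputable def lamV (V : Set ℝ) : Measure V :=
  Measure.comap Subtype.val volume

/-- The modified band depth
`D_MJ(x,P) = Σ_{j=2}^{J} ∫ λ{v ∈ V : min_k y_k(v) ≤ x(v) ≤ max_k y_k(v)} dP^{⊗j}(y) / λ(V)`. -/
noncomputable def DMJ {V : Set ℝ} [CompactSpace V] [MeasurableSpace C(V, ℝ)]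
    (J : ℕ) (x : C(V, ℝ)) (P : Measure C(V, ℝ)) : ℝ :=
  ∑ j ∈ Finset.Icc 2 J,
    (∫ y : Fin j → C(V, ℝ),
      (lamV V {v | (⨅ k, y k v) ≤ x v ∧ x v ≤ ⨆ k, y k v}).toReal
      ∂(Measure.pi fun _ : Fin j => P)) / (lamV V Set.univ).toReal

/-- The points at which the graph of `x` lies in the band spanned by the curves `y k`. This is the
set measured in `DMJ`. Real infima and suprema of empty or unbounded families are `0`, so `ι` is
meant to be finite and nonempty. -/
def bandSet {X ι : Type*} [TopologicalSpace X] (y : ι → C(X, ℝ)) (x : C(X, ℝ)) : Set X :=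
  {v | (⨅ k, y k v) ≤ x v ∧ x v ≤ ⨆ k, y k v}

section BandSet

variable {X ι : Type*} [TopologicalSpace X] [Finite ι] [Nonempty ι]

lemma mem_bandSet_iff {y : ι → C(X, ℝ)} {x : C(X, ℝ)} {v : X} :
    v ∈ bandSet y x ↔ (∃ k, y k v ≤ x v) ∧ ∃ k, x v ≤ y k v := by
  constructor
  · rintro ⟨hinf, hsup⟩
    obtain ⟨i, hi⟩ := exists_eq_ciInf_of_finite (f := fun k => y k v)
    obtain ⟨s, hs⟩ := exists_eq_ciSup_of_finite (f := fun k => y k v)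
    exact ⟨⟨i, hi.trans_le hinf⟩, ⟨s, hsup.trans_eq hs.symm⟩⟩
  · rintro ⟨⟨i, hi⟩, ⟨s, hs⟩⟩
    exact ⟨ciInf_le_of_le (Set.finite_range _).bddBelow i hi,
      le_ciSup_of_le (Set.finite_range _).bddAbove s hs⟩

lemma bandSet_comp_eq {T : C(X, ℝ) → C(X, ℝ)} (hle : ∀ y z v, T y v ≤ T z v ↔ y v ≤ z v)
    (y : ι → C(X, ℝ)) (x : C(X, ℝ)) :
    bandSet (fun k => T (y k)) (T x) = bandSet y x := by
  ext v
  simp only [mem_bandSet_iff, hle]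

lemma isClosed_mem_bandSet [LocallyCompactSpace X] (x : C(X, ℝ)) :
    IsClosed {p : (ι → C(X, ℝ)) × X | p.2 ∈ bandSet p.1 x} := by
  simp only [mem_bandSet_iff, Set.ofPred_and, Set.ofPred_exists]
  exact (isClosed_iUnion_of_finite fun k => isClosed_le (by fun_prop) (by fun_prop)).inter
    (isClosed_iUnion_of_finite fun k => isClosed_le (by fun_prop) (by fun_prop))

end BandSet

section Measure

variable {X ι : Type*} [TopologicalSpace X] [LocallyCompactSpace X] [SecondCountableTopology X]
  [MeasurableSpace X] [OpensMeasurableSpace X] [MeasurableSpace C(X, ℝ)]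
  [OpensMeasurableSpace C(X, ℝ)] [Nonempty ι]

lemma measurable_measure_bandSet [Finite ι] (μ : Measure X) [SFinite μ] (x : C(X, ℝ)) :
    Measurable fun y : ι → C(X, ℝ) => μ (bandSet y x) :=
  measurable_measure_prodMk_left (isClosed_mem_bandSet x).measurableSet

lemma integral_measure_bandSet_map [Fintype ι] (μ : Measure X) [SFinite μ]
    {T : C(X, ℝ) → C(X, ℝ)} (hT : Measurable T) (hle : ∀ y z v, T y v ≤ T z v ↔ y v ≤ z v)
    (P : Measure C(X, ℝ)) [SigmaFinite (P.map T)] (x : C(X, ℝ)) :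
    ∫ y : ι → C(X, ℝ), (μ (bandSet y (T x))).toReal ∂(Measure.pi fun _ => P.map T) =
      ∫ y : ι → C(X, ℝ), (μ (bandSet y x)).toReal ∂(Measure.pi fun _ => P) := by
  have hpi : (Measure.pi fun _ : ι => P.map T) =
      (Measure.pi fun _ => P).map fun y k => T (y k) :=
    (Measure.pi_map_pi fun _ => hT.aemeasurable).symm
  rw [hpi, integral_map_of_stronglyMeasurable (by fun_prop)
    (measurable_measure_bandSet μ (T x)).ennreal_toReal.stronglyMeasurable]
  simp only [bandSet_comp_eq hle]

end Measure

instance isFiniteMeasure_lamV (V : Set ℝ) [CompactSpace V] : IsFiniteMeasure (lamV V) := by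
  have hV : IsCompact V := isCompact_iff_compactSpace.mpr inferInstance
  constructor
  rw [lamV, comap_subtype_coe_apply hV.measurableSet, Subtype.coe_image_univ]
  exact hV.measure_lt_top

theorem stmt_13_general {V : Set ℝ} [CompactSpace V] [MeasurableSpace C(V, ℝ)]
    [OpensMeasurableSpace C(V, ℝ)] {T : C(V, ℝ) → C(V, ℝ)} (hT : Measurable T)
    (hle : ∀ y z v, T y v ≤ T z v ↔ y v ≤ z v) (J : ℕ) (P : Measure C(V, ℝ)) [IsFiniteMeasure P]
    (x : C(V, ℝ)) :
    DMJ J (T x) (P.map T) = DMJ J x P := by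
  refine Finset.sum_congr rfl fun j hj => ?_
  have : NeZero j := ⟨by grind⟩
  exact congrArg (· / (lamV V Set.univ).toReal)
    (integral_measure_bandSet_map (ι := Fin j) (lamV V) hT hle P x)

/-- The modified band depth is invariant under the transformation
`T(y) = α·y + b` with `α(v) > 0` for all `v`: `D_MJ(T x, T_*P) = D_MJ(x, P)`. -/
theorem stmt_13 (V : Set ℝ) [CompactSpace V] (hV : IsCompact V)
    (hVpos : 0 < volume V)
    (α b : C(V, ℝ)) (hα : ∀ v, 0 < α v)
    (J : ℕ) (hJ : 2 ≤ J)
    [MeasurableSpace C(V, ℝ)] [BorelSpace C(V, ℝ)]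
    (P : Measure C(V, ℝ)) [IsProbabilityMeasure P] (x : C(V, ℝ)) :
    DMJ J (α * x + b) (P.map fun y => α * y + b) = DMJ J x P := by
  exact stmt_13_general (by fun_prop) (by simp [hα]) J P x
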